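/- Let d ≥ 3 be an integer, q a prime power, and Δ = q³(q^{d−2} − 1)/(q − 1). Then there exists a finite simple graph Γ which is arc-transitive, regular of degree Δ, has diameter at most 2, and whose number of vertices is at least Δ^{2−3/d} + 2Δ^{1−1/d} + Δ^{1−2/d} + 3 (real powers). -/

import Mathlib

open Real

/-- A graph is arc-transitive if its automorphism group acts transitively on the set of
arcs (ordered pairs of adjacent vertices). -/
def SimpleGraph.IsArcTransitive {V : Type*} (G : SimpleGraph V) : Prop :=
  ∀ u v x y : V, G.Adj u v → G.Adj x y → ∃ φ : G ≃g G, φ u = x ∧ φ v = y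

/-!
Take as vertices the incident point-line pairs of the projective space `PG(d - 1, q)`, two of them
being adjacent when neither point lies on the other line but the two lines meet. An arc is then the
same as a point of the first line, the common point, and a point of the second line, in general
position, so arc-transitivity is the transitivity of the general linear group on linearly
independent triples. Two flags on the same line `ℓ` have a common neighbour through any point off
`ℓ`; for distinct lines `ℓ` and `ℓ'`, pick `z` on `ℓ` and `t` on `ℓ'`, and take the point `z + t` on
the line spanned by `z` and `t`. The number of vertices is exactly
`Δ ^ 2 / q ^ 3 + 2 * Δ / q + Δ / q ^ 2 + q + 1`, and the bound follows from `q ≤ Δ ^ (1 / d)`.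
-/

open Module Submodule Finset

section LinearAlgebra

variable {K V : Type*} [DivisionRing K] [AddCommGroup V] [Module K V]

lemma linearIndependent_pair_of_mem_of_notMem {L : Submodule K V} {s z : V} (hz : z ∈ L)
    (hz0 : z ≠ 0) (hs : s ∉ L) : LinearIndependent K ![s, z] :=
  linearIndependent_fin2.2 ⟨hz0, fun a (h : a • z = s) => hs (h ▸ L.smul_mem a hz)⟩

lemma finrank_span_pair_of_linearIndependent {v w : V} (h : LinearIndependent K ![v, w]) :
    finrank K (span K {v, w}) = 2 := by
  rw [← Matrix.range_cons_cons_empty, finrank_span_eq_card h, Fintype.card_fin]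

lemma exists_linearEquiv_apply_eq {ι : Type*} [Finite ι] {b b' : ι → V}
    (hb : LinearIndependent K b) (hb' : LinearIndependent K b') :
    ∃ g : V ≃ₗ[K] V, ∀ i, g (b i) = b' i := by
  let f := (Basis.span hb).equiv (Basis.span hb') (Equiv.refl ι)
  have : FiniteDimensional K (span K (Set.range b)) := .span_of_finite K (Set.finite_range b)
  obtain ⟨g, hg⟩ := exists_linearEquiv_restrict_eq f
  refine ⟨g, fun i => ?_⟩
  calc g (b i) = f (Basis.span hb i) := by rw [hg, Basis.span_apply]
    _ = b' i := by rw [Basis.equiv_apply, Equiv.refl_apply, Basis.span_apply]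

lemma exists_mem_notMem_notMem {L A B : Submodule K V} (hA : ¬ L ≤ A) (hB : ¬ L ≤ B) :
    ∃ z ∈ L, z ∉ A ∧ z ∉ B := by
  have h : ¬ (L : Set V) ⊆ A ∪ B := by
    rw [AddSubgroupClass.subset_union]
    exact not_or.2 ⟨hA, hB⟩
  simpa [Set.not_subset] using h

end LinearAlgebra

section Counting

lemma pow_sub_pow_eq_mul_geom_sum {q m n : ℕ} (hq : 1 ≤ q) (h : m ≤ n) :
    q ^ n - q ^ m = q ^ m * (∑ i ∈ range (n - m), q ^ i) * (q - 1) := by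
  rw [mul_assoc, geom_sum_mul_of_one_le hq, Nat.mul_sub, ← pow_add, Nat.add_sub_cancel' h, mul_one]

lemma ncard_biUnion_eq_ncard_mul {ι α : Type*} [Finite α] {t : Set ι} (ht : t.Finite)
    {S : ι → Set α} (hS : t.PairwiseDisjoint S) {n : ℕ} (hn : ∀ i ∈ t, (S i).ncard = n) :
    (⋃ i ∈ t, S i).ncard = t.ncard * n := by
  have := ht.fintype
  have hdisj : Pairwise (Function.onFun Disjoint fun i : t => S i) :=
    fun i j hij => hS i.2 j.2 (Subtype.coe_injective.ne hij)
  rw [Set.biUnion_eq_iUnion, Set.ncard_iUnion_of_finite (fun _ => Set.toFinite _) hdisj,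
    finsum_congr fun i : t => hn i i.2, finsum_eq_sum_of_fintype, sum_const, card_univ,
    smul_eq_mul, ← Nat.card_eq_fintype_card, Nat.card_coe_set_eq]

variable {K V : Type*} [DivisionRing K] [AddCommGroup V] [Module K V] [Finite K]
  [Module.Finite K V]

lemma ncard_sdiff_submodule {A B : Submodule K V} (h : A ≤ B) :
    ((B : Set V) \ A).ncard = Nat.card K ^ finrank K B - Nat.card K ^ finrank K A := by
  have : Finite V := Module.finite_of_finite K
  rw [Set.ncard_sdiff h, ← natCard_eq_pow_finrank, ← natCard_eq_pow_finrank]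
  rfl

lemma ncard_setOf_linearIndependent_pair (h : 2 ≤ finrank K V) :
    {p : V × V | LinearIndependent K ![p.1, p.2]}.ncard =
      (Nat.card K ^ finrank K V - 1) * (Nat.card K ^ finrank K V - Nat.card K) := by
  have : Finite V := Module.finite_of_finite K
  have := Fintype.ofFinite K
  have hcard := card_linearIndependent (K := K) (V := V) h
  simp only [Fin.prod_univ_two, ← Nat.card_eq_fintype_card, Fin.val_zero, Fin.val_one, pow_zero,
    pow_one] at hcard
  rw [← hcard, ← Nat.card_coe_set_eq]
  refine Nat.card_congr ((finTwoArrowEquiv V).symm.subtypeEquiv fun p => ?_)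
  simp

end Counting

/-- A point-line flag of the projective space of `V`: a one-dimensional subspace inside a
two-dimensional one. -/
@[ext]
structure PointLineFlag (K V : Type*) [DivisionRing K] [AddCommGroup V] [Module K V] where
  point : Submodule K V
  line : Submodule K V
  finrank_point : finrank K point = 1
  finrank_line : finrank K line = 2
  point_le_line : point ≤ line

namespace PointLineFlag

variable {K V : Type*} [DivisionRing K] [AddCommGroup V] [Module K V]
  {x y m : PointLineFlag K V} {s v w z : V}

instance [Finite V] : Finite (PointLineFlag K V) :=
  Finite.of_injective (fun x => (x.point, x.line)) fun _ _ h =>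
    PointLineFlag.ext (congrArg Prod.fst h) (congrArg Prod.snd h)

instance finiteDimensional_point (x : PointLineFlag K V) : FiniteDimensional K x.point :=
  .of_finrank_pos (by simp [x.finrank_point])

instance finiteDimensional_line (x : PointLineFlag K V) : FiniteDimensional K x.line :=
  .of_finrank_pos (by simp [x.finrank_line])

lemma exists_mem_point_ne_zero (x : PointLineFlag K V) : ∃ v ∈ x.point, v ≠ 0 :=
  exists_mem_ne_zero_of_ne_bot fun h =>
    one_ne_zero (x.finrank_point.symm.trans (h ▸ finrank_bot K V))

lemma not_line_le_point (x : PointLineFlag K V) : ¬ x.line ≤ x.point := fun h => by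
  have := finrank_mono h
  rw [x.finrank_line, x.finrank_point] at this
  omega

lemma not_line_le_line (h : x.line ≠ y.line) : ¬ x.line ≤ y.line := fun hle =>
  h (eq_of_le_of_finrank_eq hle (by rw [x.finrank_line, y.finrank_line]))

lemma point_eq_span (hv : v ∈ x.point) (hv0 : v ≠ 0) : x.point = K ∙ v :=
  (eq_of_le_of_finrank_eq ((span_singleton_le_iff_mem _ _).2 hv)
    (by rw [finrank_span_singleton hv0, x.finrank_point])).symm

lemma line_eq_span (hv : v ∈ x.line) (hw : w ∈ x.line) (h : LinearIndependent K ![v, w]) :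
    x.line = span K {v, w} :=
  (eq_of_le_of_finrank_eq (span_le.2 (Set.pair_subset hv hw))
    (by rw [finrank_span_pair_of_linearIndependent h, x.finrank_line])).symm

lemma finrank_inf_line_le_one (h : x.line ≠ y.line) :
    finrank K (x.line ⊓ y.line : Submodule K V) ≤ 1 := by
  have hlt : x.line ⊓ y.line < x.line := inf_lt_left.2 (not_line_le_line h)
  have := finrank_lt_finrank_of_lt hlt
  rw [x.finrank_line] at this
  omega

lemma inf_line_eq_span (h : x.line ≠ y.line) (hz : z ∈ x.line ⊓ y.line) (hz0 : z ≠ 0) :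
    x.line ⊓ y.line = K ∙ z :=
  (eq_of_le_of_finrank_le ((span_singleton_le_iff_mem _ _).2 hz)
    (by rw [finrank_span_singleton hz0]; exact finrank_inf_line_le_one h)).symm

/-- The pairs `(v, w)` of vectors adapted to a flag: `v` spans its point, and `v`, `w` span its
line. -/
def frames (x : PointLineFlag K V) : Set (V × V) :=
  ((x.point : Set V) \ {0}) ×ˢ ((x.line : Set V) \ x.point)

lemma mem_frames :
    (v, w) ∈ x.frames ↔ (v ∈ x.point ∧ v ≠ 0) ∧ w ∈ x.line ∧ w ∉ x.point := Iff.rfl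

lemma linearIndependent_of_mem_frames (h : (v, w) ∈ x.frames) : LinearIndependent K ![v, w] := by
  obtain ⟨⟨hv, hv0⟩, -, hw⟩ := mem_frames.1 h
  exact (LinearIndependent.pair_iff' hv0).2 fun a ha => hw (ha ▸ x.point.smul_mem a hv)

lemma exists_mem_frames (h : LinearIndependent K ![v, w]) :
    ∃ x : PointLineFlag K V, (v, w) ∈ x.frames := by
  have hv0 : v ≠ 0 := h.ne_zero 0
  let x : PointLineFlag K V :=
    { point := K ∙ v
      line := span K {v, w}
      finrank_point := finrank_span_singleton hv0
      finrank_line := finrank_span_pair_of_linearIndependent h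
      point_le_line := span_mono (by simp) }
  refine ⟨x, mem_frames.2 ⟨⟨?_, hv0⟩, ?_, ?_⟩⟩
  · exact mem_span_singleton_self v
  · exact mem_span_of_mem (by simp)
  · simpa [x, mem_span_singleton] using (LinearIndependent.pair_iff' hv0).1 h

lemma eq_of_mem_frames (hx : (v, w) ∈ x.frames) (hy : (v, w) ∈ y.frames) : x = y := by
  have hvw := linearIndependent_of_mem_frames hx
  obtain ⟨⟨hvx, hv0⟩, hwx, -⟩ := mem_frames.1 hx
  obtain ⟨⟨hvy, -⟩, hwy, -⟩ := mem_frames.1 hy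
  ext1
  · rw [point_eq_span hvx hv0, point_eq_span hvy hv0]
  · rw [line_eq_span (x.point_le_line hvx) hwx hvw, line_eq_span (y.point_le_line hvy) hwy hvw]

lemma pairwiseDisjoint_frames (t : Set (PointLineFlag K V)) : t.PairwiseDisjoint frames :=
  fun _ _ _ _ hne => Set.disjoint_left.2 fun _ hx hy => hne (eq_of_mem_frames hx hy)

lemma biUnion_frames :
    ⋃ x ∈ (Set.univ : Set (PointLineFlag K V)), x.frames =
      {p | LinearIndependent K ![p.1, p.2]} := by
  ext p
  simp only [Set.mem_univ, Set.iUnion_true, Set.mem_iUnion, Set.mem_ofPred_eq]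
  exact ⟨fun ⟨_, h⟩ => linearIndependent_of_mem_frames h, exists_mem_frames⟩

lemma nonempty_of_two_le_finrank (h : 2 ≤ finrank K V) : Nonempty (PointLineFlag K V) := by
  have : Nontrivial V := nontrivial_of_finrank_pos (R := K) (by omega)
  obtain ⟨v, hv⟩ := exists_ne (0 : V)
  obtain ⟨w, hvw⟩ := exists_linearIndependent_pair_of_one_lt_finrank h hv
  exact (exists_mem_frames hvw).nonempty

/-- The image of a flag under a linear automorphism. -/
def map (g : V ≃ₗ[K] V) (x : PointLineFlag K V) : PointLineFlag K V where
  point := x.point.map (g : V →ₗ[K] V)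
  line := x.line.map (g : V →ₗ[K] V)
  finrank_point := (g.finrank_map_eq x.point).trans x.finrank_point
  finrank_line := (g.finrank_map_eq x.line).trans x.finrank_line
  point_le_line := map_mono x.point_le_line

lemma map_symm_map (g : V ≃ₗ[K] V) (x : PointLineFlag K V) : (x.map g).map g.symm = x := by
  ext1 <;> simp [map, ← map_comp]

lemma map_mem_frames (g : V ≃ₗ[K] V) (h : (v, w) ∈ x.frames) : (g v, g w) ∈ (x.map g).frames := by
  simpa [mem_frames, map] using h

/-- The graph on point-line flags in which two flags are adjacent when neither point lies on the
other line and the two lines meet. -/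
def graph (K V : Type*) [DivisionRing K] [AddCommGroup V] [Module K V] :
    SimpleGraph (PointLineFlag K V) where
  Adj x y := Disjoint x.point y.line ∧ Disjoint y.point x.line ∧ ¬ Disjoint x.line y.line
  symm := ⟨fun _ _ ⟨h₁, h₂, h₃⟩ => ⟨h₂, h₁, fun h => h₃ h.symm⟩⟩
  loopless := ⟨fun x ⟨h, _⟩ => by
    obtain ⟨v, hv, hv0⟩ := x.exists_mem_point_ne_zero
    exact hv0 (disjoint_def.1 h v hv (x.point_le_line hv))⟩

lemma graph_adj : (graph K V).Adj x y ↔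
    Disjoint x.point y.line ∧ Disjoint y.point x.line ∧ ¬ Disjoint x.line y.line := Iff.rfl

lemma line_ne_line_of_adj (h : (graph K V).Adj x y) : x.line ≠ y.line := fun hxy =>
  (graph K V).loopless.irrefl x ⟨hxy ▸ h.1, hxy ▸ h.1, hxy ▸ h.2.2⟩

lemma exists_mem_inf_line_of_adj (h : (graph K V).Adj x y) : ∃ z ∈ x.line ⊓ y.line, z ≠ 0 :=
  exists_mem_ne_zero_of_ne_bot fun h0 => h.2.2 (disjoint_iff.2 h0)

lemma finrank_inf_line_of_adj (h : (graph K V).Adj x y) :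
    finrank K (x.line ⊓ y.line : Submodule K V) = 1 := by
  obtain ⟨z, hz, hz0⟩ := exists_mem_inf_line_of_adj h
  rw [inf_line_eq_span (line_ne_line_of_adj h) hz hz0, finrank_span_singleton hz0]

lemma adj_of_mem_frames (hsz : (s, z) ∈ y.frames) (hs : s ∉ x.line) (hz : z ∈ x.line)
    (hzx : z ∉ x.point) : (graph K V).Adj x y := by
  obtain ⟨⟨hsy, hs0⟩, hzy, -⟩ := mem_frames.1 hsz
  have hz0 : z ≠ 0 := fun h => hzx (h ▸ x.point.zero_mem)
  have hne : x.line ≠ y.line := fun h => hs (h ▸ y.point_le_line hsy)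
  refine graph_adj.2 ⟨?_, ?_, fun h => hz0 (disjoint_def.1 h z hz hzy)⟩
  · have hxz : Disjoint x.point (x.line ⊓ y.line) := by
      rwa [inf_line_eq_span hne ⟨hz, hzy⟩ hz0, disjoint_span_singleton' hz0]
    exact disjoint_def.2 fun t ht hty => disjoint_def.1 hxz t ht ⟨x.point_le_line ht, hty⟩
  · rw [point_eq_span hsy hs0]
    exact ((disjoint_span_singleton' hs0).2 hs).symm

lemma mem_frames_of_adj (h : (graph K V).Adj x y) (hv : v ∈ x.point) (hv0 : v ≠ 0)
    (hz : z ∈ x.line ⊓ y.line) (hz0 : z ≠ 0) : (v, z) ∈ x.frames :=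
  mem_frames.2 ⟨⟨hv, hv0⟩, hz.1, fun hzx => hz0 (disjoint_def.1 h.1 z hzx hz.2)⟩

/-! ### Arc-transitivity -/

lemma exists_linearIndependent_of_adj (h : (graph K V).Adj x y) :
    ∃ b : Fin 3 → V, LinearIndependent K b ∧ (b 1, b 2) ∈ x.frames ∧ (b 0, b 2) ∈ y.frames := by
  obtain ⟨v, hv, hv0⟩ := x.exists_mem_point_ne_zero
  obtain ⟨u, hu, hu0⟩ := y.exists_mem_point_ne_zero
  obtain ⟨z, hz, hz0⟩ := exists_mem_inf_line_of_adj h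
  have hvz : (v, z) ∈ x.frames := mem_frames_of_adj h hv hv0 hz hz0
  have huz : (u, z) ∈ y.frames := mem_frames_of_adj h.symm hu hu0 hz.symm hz0
  have hvz_li := linearIndependent_of_mem_frames hvz
  refine ⟨![u, v, z], linearIndependent_finCons.2 ⟨hvz_li, ?_⟩, hvz, huz⟩
  rw [Matrix.range_cons_cons_empty, ← line_eq_span (x.point_le_line hv) hz.1 hvz_li]
  exact fun hux => hu0 (disjoint_def.1 h.2.1 u hu hux)

lemma map_adj_map (g : V ≃ₗ[K] V) (h : (graph K V).Adj x y) :
    (graph K V).Adj (x.map g) (y.map g) := by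
  exact ⟨disjoint_map g.injective h.1, disjoint_map g.injective h.2.1,
    fun hd => h.2.2 ((disjoint_map_orderIso_iff (Submodule.orderIsoMapComap g)).1 hd)⟩

/-- The automorphism of the flag graph induced by a linear automorphism. -/
def graphIso (g : V ≃ₗ[K] V) : graph K V ≃g graph K V where
  toFun := map g
  invFun := map g.symm
  left_inv := map_symm_map g
  right_inv := map_symm_map g.symm
  map_rel_iff' := ⟨fun h => by simpa [map_symm_map] using map_adj_map g.symm h, map_adj_map g⟩

theorem isArcTransitive_graph : (graph K V).IsArcTransitive := by
  intro x y x' y' h h'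
  obtain ⟨b, hb, hbx, hby⟩ := exists_linearIndependent_of_adj h
  obtain ⟨b', hb', hbx', hby'⟩ := exists_linearIndependent_of_adj h'
  obtain ⟨g, hg⟩ := exists_linearEquiv_apply_eq hb hb'
  refine ⟨graphIso g, eq_of_mem_frames (map_mem_frames g hbx) ?_,
    eq_of_mem_frames (map_mem_frames g hby) ?_⟩
  · rwa [hg, hg]
  · rwa [hg, hg]

/-! ### Diameter -/

lemma exists_adj_adj_of_line_eq (hV : 3 ≤ finrank K V) (h : x.line = y.line) :
    ∃ m, (graph K V).Adj x m ∧ (graph K V).Adj y m := by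
  obtain ⟨z, hz, hzx, hzy⟩ := exists_mem_notMem_notMem x.not_line_le_point (h ▸ y.not_line_le_point)
  have htop : x.line < ⊤ := lt_top_iff_ne_top.2 fun htop => by
    have := x.finrank_line
    rw [htop, finrank_top] at this
    omega
  obtain ⟨s, -, hs⟩ := SetLike.exists_of_lt htop
  have hz0 : z ≠ 0 := fun h0 => hzx (h0 ▸ x.point.zero_mem)
  obtain ⟨m, hm⟩ := exists_mem_frames (linearIndependent_pair_of_mem_of_notMem hz hz0 hs)
  exact ⟨m, adj_of_mem_frames hm hs hz hzx, adj_of_mem_frames hm (h ▸ hs) (h ▸ hz) hzy⟩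

lemma exists_adj_adj_of_line_ne (h : x.line ≠ y.line) :
    ∃ m, (graph K V).Adj x m ∧ (graph K V).Adj y m := by
  obtain ⟨z, hz, hzx, hzy⟩ := exists_mem_notMem_notMem x.not_line_le_point (not_line_le_line h)
  obtain ⟨t, ht, hty, htx⟩ := exists_mem_notMem_notMem y.not_line_le_point (not_line_le_line h.symm)
  have hsx : z + t ∉ x.line := fun hs => htx ((x.line.add_mem_iff_right hz).1 hs)
  have hsy : z + t ∉ y.line := fun hs => hzy ((y.line.add_mem_iff_left ht).1 hs)
  have hz0 : z ≠ 0 := fun h0 => hzx (h0 ▸ x.point.zero_mem)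
  obtain ⟨m, hmz⟩ := exists_mem_frames (linearIndependent_pair_of_mem_of_notMem hz hz0 hsx)
  obtain ⟨⟨hs, hs0⟩, hzm, hzm'⟩ := mem_frames.1 hmz
  have hmt : (z + t, t) ∈ m.frames := mem_frames.2 ⟨⟨hs, hs0⟩,
    (m.line.add_mem_iff_right hzm).1 (m.point_le_line hs),
    fun htm => hzm' ((m.point.add_mem_iff_left htm).1 hs)⟩
  exact ⟨m, adj_of_mem_frames hmz hsx hz hzx, adj_of_mem_frames hmt hsy ht hty⟩

lemma exists_walk_length_eq_two (hV : 3 ≤ finrank K V) (x y : PointLineFlag K V) :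
    ∃ p : (graph K V).Walk x y, p.length = 2 := by
  obtain ⟨m, hx, hy⟩ : ∃ m, (graph K V).Adj x m ∧ (graph K V).Adj y m :=
    (eq_or_ne x.line y.line).elim (exists_adj_adj_of_line_eq hV) exists_adj_adj_of_line_ne
  exact ⟨.cons hx (.cons hy.symm .nil), rfl⟩

theorem connected_graph (hV : 3 ≤ finrank K V) : (graph K V).Connected where
  preconnected x y := (exists_walk_length_eq_two hV x y).nonempty
  nonempty := nonempty_of_two_le_finrank (by omega)

theorem dist_graph_le_two (hV : 3 ≤ finrank K V) (x y : PointLineFlag K V) :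
    (graph K V).dist x y ≤ 2 := by
  obtain ⟨p, hp⟩ := exists_walk_length_eq_two hV x y
  exact hp ▸ SimpleGraph.dist_le p

/-! ### Order and degree -/

/-- For `y` adjacent to `x`, the frames `(s, z)` of `y` in which `z` spans the common point of the
two lines. -/
def meetingFrames (x y : PointLineFlag K V) : Set (V × V) :=
  ((y.point : Set V) \ {0}) ×ˢ (((x.line ⊓ y.line : Submodule K V) : Set V) \ {0})

lemma meetingFrames_subset_frames_of_adj (h : (graph K V).Adj x y) :
    x.meetingFrames y ⊆ y.frames := fun _ ⟨⟨hs, hs0⟩, hz, hz0⟩ =>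
  mem_frames_of_adj h.symm hs hs0 hz.symm hz0

lemma biUnion_meetingFrames (x : PointLineFlag K V) :
    ⋃ y ∈ (graph K V).neighborSet x, x.meetingFrames y =
      (((⊤ : Submodule K V) : Set V) \ x.line) ×ˢ ((x.line : Set V) \ x.point) := by
  ext ⟨s, z⟩
  simp only [Set.mem_iUnion, exists_prop, SimpleGraph.mem_neighborSet]
  constructor
  · rintro ⟨y, h, ⟨hs, hs0⟩, hz, hz0⟩
    exact ⟨⟨mem_top, fun hsx => hs0 (disjoint_def.1 h.2.1 s hs hsx)⟩, hz.1,
      fun hzx => hz0 (disjoint_def.1 h.1 z hzx hz.2)⟩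
  · rintro ⟨⟨-, hs⟩, hz, hzx⟩
    have hz0 : z ≠ 0 := fun h0 => hzx (h0 ▸ x.point.zero_mem)
    obtain ⟨y, hy⟩ := exists_mem_frames (linearIndependent_pair_of_mem_of_notMem hz hz0 hs)
    exact ⟨y, adj_of_mem_frames hy hs hz hzx, hy.1, ⟨hz, hy.2.1⟩, hz0⟩

section Finite

variable [Finite K] [Module.Finite K V]

lemma ncard_frames (x : PointLineFlag K V) :
    x.frames.ncard = (Nat.card K - 1) * (Nat.card K ^ 2 - Nat.card K) := by
  rw [frames, Set.ncard_prod, ← bot_coe (R := K), ncard_sdiff_submodule bot_le,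
    ncard_sdiff_submodule x.point_le_line, x.finrank_point, x.finrank_line, finrank_bot, pow_one,
    pow_zero]

theorem natCard_eq (hV : 2 ≤ finrank K V) :
    Nat.card (PointLineFlag K V) = (∑ i ∈ range (finrank K V), Nat.card K ^ i) *
      ∑ i ∈ range (finrank K V - 1), Nat.card K ^ i := by
  have : Finite V := Module.finite_of_finite K
  have hK : 1 < Nat.card K := Finite.one_lt_card
  have hcount := ncard_biUnion_eq_ncard_mul Set.finite_univ
    (pairwiseDisjoint_frames (K := K) (V := V) Set.univ) fun x _ => x.ncard_frames
  rw [biUnion_frames, ncard_setOf_linearIndependent_pair hV, Set.ncard_univ] at hcount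
  have h₀ := geom_sum_mul_of_one_le hK.le (finrank K V)
  have h₁ := pow_sub_pow_eq_mul_geom_sum hK.le (one_le_two.trans hV)
  have h₂ : Nat.card K ^ 2 - Nat.card K = Nat.card K * (Nat.card K - 1) := by
    rw [Nat.mul_sub_one, sq]
  rw [pow_one] at h₁
  rw [← h₀, h₁, h₂] at hcount
  have hpos : 0 < (Nat.card K - 1) * (Nat.card K * (Nat.card K - 1)) := by
    have := Nat.sub_pos_of_lt hK
    positivity
  refine Nat.eq_of_mul_eq_mul_right hpos (hcount.symm.trans ?_)
  ring

lemma ncard_meetingFrames_of_adj (h : (graph K V).Adj x y) :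
    (x.meetingFrames y).ncard = (Nat.card K - 1) * (Nat.card K - 1) := by
  rw [meetingFrames, Set.ncard_prod, ← bot_coe (R := K), ncard_sdiff_submodule bot_le,
    ncard_sdiff_submodule bot_le, y.finrank_point, finrank_inf_line_of_adj h, finrank_bot, pow_one,
    pow_zero]

theorem ncard_neighborSet_graph (x : PointLineFlag K V) :
    ((graph K V).neighborSet x).ncard =
      Nat.card K ^ 3 * ∑ i ∈ range (finrank K V - 2), Nat.card K ^ i := by
  have : Finite V := Module.finite_of_finite K
  have hK : 1 < Nat.card K := Finite.one_lt_card
  have hcount := ncard_biUnion_eq_ncard_mul (Set.toFinite ((graph K V).neighborSet x))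
    ((pairwiseDisjoint_frames _).mono_on fun _ => meetingFrames_subset_frames_of_adj)
    fun _ => ncard_meetingFrames_of_adj
  rw [biUnion_meetingFrames, Set.ncard_prod, ncard_sdiff_submodule le_top,
    ncard_sdiff_submodule x.point_le_line, finrank_top, x.finrank_line, x.finrank_point,
    pow_one] at hcount
  have hV : 2 ≤ finrank K V := x.finrank_line ▸ x.line.finrank_le
  have h₁ : Nat.card K ^ 2 - Nat.card K = Nat.card K * (Nat.card K - 1) := by
    rw [Nat.mul_sub_one, sq]
  rw [pow_sub_pow_eq_mul_geom_sum hK.le hV, h₁] at hcount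
  have hpos : 0 < (Nat.card K - 1) * (Nat.card K - 1) := by
    have := Nat.sub_pos_of_lt hK
    positivity
  refine Nat.eq_of_mul_eq_mul_right hpos (hcount.symm.trans ?_)
  ring

end Finite

end PointLineFlag

lemma rpow_sub_div_le_div_pow {q D : ℝ} {d : ℕ} (hq : 0 < q) (hd : d ≠ 0) (h : q ^ d ≤ D)
    (a : ℝ) (k : ℕ) : D ^ (a - k / d) ≤ D ^ a / q ^ k := by
  have hD : 0 < D := (pow_pos hq d).trans_le h
  have hqk : q ^ k ≤ D ^ (k / d : ℝ) := calc
    q ^ k = (q ^ d) ^ (k / d : ℝ) := by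
      rw [← rpow_natCast q d, ← rpow_mul hq.le, mul_div_cancel₀ _ (by positivity), rpow_natCast]
    _ ≤ D ^ (k / d : ℝ) := by gcongr
  rw [rpow_sub hD]
  gcongr

lemma rpow_add_rpow_add_rpow_add_three_le {q G : ℝ} {d : ℕ} (hq : 2 ≤ q) (hd : d ≠ 0)
    (h : q ^ d ≤ q ^ 3 * G) :
    (q ^ 3 * G) ^ (2 - 3 / d : ℝ) + 2 * (q ^ 3 * G) ^ (1 - 1 / d : ℝ) +
      (q ^ 3 * G) ^ (1 - 2 / d : ℝ) + 3 ≤ (q * (q * G + 1) + 1) * (q * G + 1) := by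
  have hq0 : 0 < q := by linarith
  have hbound := rpow_sub_div_le_div_pow hq0 hd h
  have h₁ : (q ^ 3 * G) ^ (2 - 3 / d : ℝ) ≤ q ^ 3 * G ^ 2 := by
    convert hbound 2 3 using 1
    · simp
    · rw [rpow_two]
      field_simp
  have h₂ : (q ^ 3 * G) ^ (1 - 1 / d : ℝ) ≤ q ^ 2 * G := by
    convert hbound 1 1 using 1
    · simp
    · rw [rpow_one]
      field_simp
  have h₃ : (q ^ 3 * G) ^ (1 - 2 / d : ℝ) ≤ q * G := by
    convert hbound 1 2 using 1
    · simp
    · rw [rpow_one]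
      field_simp
  linarith

lemma rpow_bound_le_geom_sum_mul_geom_sum {d q : ℕ} (hd : 3 ≤ d) (hq : 2 ≤ q) {Δ : ℕ}
    (hΔ : Δ = q ^ 3 * ∑ i ∈ range (d - 2), q ^ i) :
    (Δ : ℝ) ^ (2 - 3 / d : ℝ) + 2 * (Δ : ℝ) ^ (1 - 1 / d : ℝ) + (Δ : ℝ) ^ (1 - 2 / d : ℝ) + 3 ≤
      ((∑ i ∈ range d, q ^ i) * ∑ i ∈ range (d - 1), q ^ i : ℕ) := by
  set G := ∑ i ∈ range (d - 2), q ^ i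
  have hsum₁ : ∑ i ∈ range (d - 1), q ^ i = q * G + 1 := by
    rw [show d - 1 = d - 2 + 1 by omega, geom_sum_succ]
  have hsum₂ : ∑ i ∈ range d, q ^ i = q * (q * G + 1) + 1 := by
    rw [← hsum₁, ← geom_sum_succ, Nat.sub_add_cancel (by omega)]
  have hpow : q ^ d ≤ q ^ 3 * G := calc
    q ^ d = q ^ 3 * q ^ (d - 3) := by rw [← pow_add, Nat.add_sub_cancel' hd]
    _ ≤ q ^ 3 * G := Nat.mul_le_mul_left _ (single_le_sum (f := (q ^ ·))
      (fun _ _ => Nat.zero_le _) (mem_range.2 (by omega : d - 3 < d - 2)))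
  rw [hsum₂, hsum₁, hΔ]
  push_cast
  exact rpow_add_rpow_add_rpow_add_three_le (mod_cast hq) (by omega) (mod_cast hpow)

lemma exists_field_natCard_eq {q : ℕ} (hq : IsPrimePow q) :
    ∃ (K : Type) (_ : Field K), Nat.card K = q := by
  obtain ⟨inst⟩ : Nonempty (Field (Fin q)) := Fintype.nonempty_field_iff.2 (by simpa)
  exact ⟨Fin q, inst, by simp⟩

open PointLineFlag in
theorem arcTransitive_diameter_two_lower_bound_prime_power
    (d q : ℕ) (hd : 3 ≤ d) (hq : IsPrimePow q)
    (Δ : ℕ) (hΔ : Δ = q ^ 3 * (q ^ (d - 2) - 1) / (q - 1)) :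
    ∃ (V : Type) (_ : Fintype V) (G : SimpleGraph V),
      G.IsArcTransitive ∧
      (∀ v : V, (G.neighborSet v).ncard = Δ) ∧
      G.Connected ∧ (∀ u v : V, G.dist u v ≤ 2) ∧
      (Δ : ℝ) ^ (2 - 3 / (d : ℝ)) + 2 * (Δ : ℝ) ^ (1 - 1 / (d : ℝ)) +
          (Δ : ℝ) ^ (1 - 2 / (d : ℝ)) + 3 ≤ (Fintype.card V : ℝ) := by
  have hq2 : 2 ≤ q := hq.two_le
  obtain ⟨K, _, rfl⟩ := exists_field_natCard_eq hq
  have : Finite K := Nat.finite_of_card_ne_zero (by omega)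
  have hV : finrank K (Fin d → K) = d := finrank_fin_fun K
  have hΔ' : Δ = Nat.card K ^ 3 * ∑ i ∈ range (d - 2), Nat.card K ^ i := by
    rw [hΔ, ← geom_sum_mul_of_one_le (by omega), ← mul_assoc, Nat.mul_div_cancel _ (by omega)]
  refine ⟨PointLineFlag K (Fin d → K), Fintype.ofFinite _, graph K _, isArcTransitive_graph,
    fun x => ?_, connected_graph (by omega), dist_graph_le_two (by omega), ?_⟩
  · rw [ncard_neighborSet_graph, hV, hΔ']
  · rw [← @Nat.card_eq_fintype_card _ (Fintype.ofFinite _), natCard_eq (by omega), hV]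
    exact rpow_bound_le_geom_sum_mul_geom_sum hd hq2 hΔ'
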